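/- Let N ≥ 1 and let G be a subgroup of the permutation group of Fin N. Let Gsu(2^N) be the real vector space of 2^N × 2^N complex matrices a that are skew-Hermitian, traceless, and satisfy U_α a U_α⁻¹ = a for all α ∈ G. Then the real dimension of Gsu(2^N) equals the number of orbits of the action of G on the set of functions (Fin N → Fin 4) given by α • μ = μ ∘ α⁻¹, minus one. -/

import Mathlib

/-! The map `b ↦ (b - bᵀ) + i (b + bᵀ)` is a real-linear bijection from real matrices onto
skew-Hermitian ones. It commutes with simultaneous permutations of rows and columns and multiplies
the trace by `2i`, so it suffices to count real matrices that are invariant and traceless. An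
invariant matrix is a function on the orbits of pairs of indices, and the trace is a nonzero linear
form on these functions, which costs one dimension. Finally, a pair of bit strings is a string over
`Fin 2 × Fin 2 ≃ Fin 4`. -/

open Matrix

/-- The permutation matrix on the index set `I → Fin 2` associated to a permutation `α` of
`I`, corresponding to the bijection `x ↦ x ∘ α`: its `(x, y)` entry is `1` if `y = x ∘ α`
and `0` otherwise. -/
def qubitPermMatrix {I : Type*} [DecidableEq I] [Fintype I] (α : Equiv.Perm I) :
    Matrix (I → Fin 2) (I → Fin 2) ℂ :=
  Matrix.of fun x y => if y = x ∘ α then 1 else 0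

section InvariantMatrices

variable (R G X : Type*)

/-- The traceless matrices indexed by `X` that are invariant under the simultaneous action
of `G` on rows and columns. -/
def tracelessInvariant [Semiring R] [SMul G X] [Fintype X] : Submodule R (Matrix X X R) where
  carrier := {a | a.trace = 0 ∧ ∀ g : G, a.submatrix (g • ·) (g • ·) = a}
  zero_mem' := ⟨trace_zero X R, fun _ => rfl⟩
  add_mem' {a b} ha hb :=
    ⟨by rw [trace_add, ha.1, hb.1, add_zero], fun g => by
      rw [submatrix_add, Pi.add_apply, Pi.add_apply, ha.2, hb.2]⟩
  smul_mem' c a ha :=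
    ⟨by rw [trace_smul, ha.1, smul_zero], fun g => by
      rw [submatrix_smul, Pi.smul_apply, Pi.smul_apply, ha.2]⟩

variable [Group G] [MulAction G X]

/-- The matrix of a function on the orbits of pairs of indices: its `(x, y)` entry is the value of
the function at the orbit of `(x, y)`. -/
def orbitMatrix [Semiring R] :
    (MulAction.orbitRel.Quotient G (X × X) → R) →ₗ[R] Matrix X X R where
  toFun f := of fun x y => f (Quotient.mk _ (x, y))
  map_add' _ _ := rfl
  map_smul' _ _ := rfl

theorem orbitMatrix_injective [Semiring R] : Function.Injective (orbitMatrix R G X) := by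
  intro f g h
  funext q
  induction q using Quotient.inductionOn with
  | h p => exact congrFun₂ h p.1 p.2

theorem mem_range_orbitMatrix_iff [Semiring R] (a : Matrix X X R) :
    a ∈ LinearMap.range (orbitMatrix R G X) ↔
      ∀ g : G, a.submatrix (g • ·) (g • ·) = a := by
  constructor
  · rintro ⟨f, rfl⟩ g
    ext x y
    exact congrArg f (Quotient.sound ⟨g, rfl⟩)
  · intro ha
    refine ⟨Quotient.lift (fun p => a p.1 p.2) ?_, rfl⟩
    rintro _ p ⟨g, rfl⟩
    exact congrFun₂ (ha g) p.1 p.2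

variable [Fintype X]

theorem tracelessInvariant_eq_map_ker [Semiring R] :
    tracelessInvariant R G X =
      (LinearMap.ker (traceLinearMap X R R ∘ₗ orbitMatrix R G X)).map (orbitMatrix R G X) := by
  rw [LinearMap.ker_comp, Submodule.map_comap_eq]
  ext a
  exact and_comm.trans (and_congr_left' (mem_range_orbitMatrix_iff R G X a).symm)

theorem trace_comp_orbitMatrix_ne_zero [Semiring R] [CharZero R] [Nonempty X] :
    traceLinearMap X R R ∘ₗ orbitMatrix R G X ≠ 0 := by
  intro h
  have sum_one_eq_zero : ∑ _x : X, (1 : R) = 0 := LinearMap.congr_fun h 1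
  simp at sum_one_eq_zero

theorem finrank_tracelessInvariant [Field R] [CharZero R] [Nonempty X] :
    Module.finrank R (tracelessInvariant R G X) =
      Nat.card (MulAction.orbitRel.Quotient G (X × X)) - 1 := by
  have := Fintype.ofFinite (MulAction.orbitRel.Quotient G (X × X))
  have finrank_ker := Module.Dual.finrank_ker_add_one_of_ne_zero
    (trace_comp_orbitMatrix_ne_zero R G X)
  rw [Module.finrank_fintype_fun_eq_card, ← Nat.card_eq_fintype_card] at finrank_ker
  rw [tracelessInvariant_eq_map_ker, ← (Submodule.equivMapOfInjective _
    (orbitMatrix_injective R G X) _).finrank_eq]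
  exact Nat.eq_sub_of_add_eq finrank_ker

end InvariantMatrices

section SkewHermitian

variable {X Y : Type*}

/-- The real-linear parametrization `b ↦ (b - bᵀ) + i (b + bᵀ)` of skew-Hermitian matrices by real
matrices. -/
def skewHermitianOfReal : Matrix X X ℝ →ₗ[ℝ] Matrix X X ℂ where
  toFun b := of fun x y => ⟨b x y - b y x, b x y + b y x⟩
  map_add' b c := by
    ext x y
    apply Complex.ext <;> simp <;> ring
  map_smul' r b := by
    ext x y
    apply Complex.ext <;> simp <;> ring

theorem skewHermitianOfReal_injective :
    Function.Injective (skewHermitianOfReal : Matrix X X ℝ →ₗ[ℝ] Matrix X X ℂ) := by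
  intro b c h
  ext x y
  have re_eq : b x y - b y x = c x y - c y x := congrArg Complex.re (congrFun₂ h x y)
  have im_eq : b x y + b y x = c x y + c y x := congrArg Complex.im (congrFun₂ h x y)
  linarith

theorem range_skewHermitianOfReal :
    LinearMap.range (skewHermitianOfReal : Matrix X X ℝ →ₗ[ℝ] Matrix X X ℂ) =
      skewAdjoint.submodule ℝ (Matrix X X ℂ) := by
  ext a
  constructor
  · rintro ⟨b, rfl⟩
    change (skewHermitianOfReal b)ᴴ = -skewHermitianOfReal b
    ext x y
    apply Complex.ext <;> simp [skewHermitianOfReal, add_comm]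
  · intro (ha : aᴴ = -a)
    refine ⟨of fun x y => ((a x y).re + (a x y).im) / 2, ?_⟩
    ext x y
    have swap : star (a y x) = -a x y := congrFun₂ ha x y
    have re_swap : (a y x).re = -(a x y).re := congrArg Complex.re swap
    have im_swap : -(a y x).im = -(a x y).im := congrArg Complex.im swap
    apply Complex.ext <;> simp only [skewHermitianOfReal, LinearMap.coe_mk, AddHom.coe_mk, of_apply]
    all_goals linarith

theorem skewHermitianOfReal_submatrix (b : Matrix X X ℝ) (f : Y → X) :
    skewHermitianOfReal (b.submatrix f f) = (skewHermitianOfReal b).submatrix f f :=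
  rfl

theorem trace_skewHermitianOfReal [Fintype X] (b : Matrix X X ℝ) :
    (skewHermitianOfReal b).trace = 2 * Complex.I * b.trace := by
  apply Complex.ext <;>
    simp [skewHermitianOfReal, Matrix.trace, ← two_mul, Finset.mul_sum]

variable (G X) [Fintype X]

theorem comap_skewHermitianOfReal_tracelessInvariant [SMul G X] :
    ((tracelessInvariant ℂ G X).restrictScalars ℝ).comap skewHermitianOfReal =
      tracelessInvariant ℝ G X := by
  ext b
  refine and_congr ?_ (forall_congr' fun g => ?_)
  · simp [trace_skewHermitianOfReal]
  · rw [← skewHermitianOfReal_submatrix, skewHermitianOfReal_injective.eq_iff]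

theorem finrank_skewAdjoint_inf_tracelessInvariant [Group G] [MulAction G X] [Nonempty X] :
    Module.finrank ℝ ↥(skewAdjoint.submodule ℝ (Matrix X X ℂ) ⊓
        (tracelessInvariant ℂ G X).restrictScalars ℝ) =
      Nat.card (MulAction.orbitRel.Quotient G (X × X)) - 1 := by
  rw [← range_skewHermitianOfReal, ← Submodule.map_comap_eq,
    comap_skewHermitianOfReal_tracelessInvariant,
    ← (Submodule.equivMapOfInjective _ skewHermitianOfReal_injective _).finrank_eq,
    finrank_tracelessInvariant]

end SkewHermitian

section Strings

variable {I : Type*}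

theorem qubitPermMatrix_eq_permMatrix [DecidableEq I] [Fintype I] (α : Equiv.Perm I) :
    qubitPermMatrix α = Equiv.Perm.permMatrix ℂ (α.symm.arrowCongr (Equiv.refl (Fin 2))) := by
  ext x y
  simp [qubitPermMatrix, PEquiv.toMatrix_apply, Equiv.arrowCongr, eq_comm (a := y)]

theorem qubitPermMatrix_conj [DecidableEq I] [Fintype I] (α : Equiv.Perm I)
    (a : Matrix (I → Fin 2) (I → Fin 2) ℂ) :
    qubitPermMatrix α * a * (qubitPermMatrix α)⁻¹ = a.submatrix (· ∘ α) (· ∘ α) := by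
  let σ : Equiv.Perm (I → Fin 2) := α.symm.arrowCongr (Equiv.refl (Fin 2))
  have inv_eq : (σ.permMatrix ℂ)⁻¹ = σ⁻¹.permMatrix ℂ :=
    inv_eq_right_inv (by rw [← permMatrix_mul, inv_mul_cancel, permMatrix_one])
  rw [qubitPermMatrix_eq_permMatrix, inv_eq, PEquiv.toMatrix_toPEquiv_mul,
    PEquiv.mul_toMatrix_toPEquiv, submatrix_submatrix]
  rfl

attribute [local instance] arrowAction

theorem forall_mem_qubitPermMatrix_conj_eq_iff [DecidableEq I] [Fintype I]
    (G : Subgroup (Equiv.Perm I)) (a : Matrix (I → Fin 2) (I → Fin 2) ℂ) :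
    (∀ α ∈ G, qubitPermMatrix α * a * (qubitPermMatrix α)⁻¹ = a) ↔
      ∀ g : G, a.submatrix (g • ·) (g • ·) = a := by
  rw [← (Equiv.inv G).forall_congr_right, Subtype.forall]
  refine forall₂_congr fun α hα => ?_
  have inv_smul_eq : ((⟨α, hα⟩ : G)⁻¹ • · : (I → Fin 2) → I → Fin 2) = (· ∘ α) := by
    funext x
    change x ∘ ⇑(α⁻¹⁻¹ : Equiv.Perm I) = x ∘ α
    rw [inv_inv]
  rw [qubitPermMatrix_conj, Equiv.inv_apply, inv_smul_eq]

theorem card_orbits_strings_eq_card_orbits_pairs {β γ δ : Type*} (e : β × γ ≃ δ)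
    (G : Subgroup (Equiv.Perm I)) :
    Nat.card (Quot fun μ ν : I → δ => ∃ α ∈ G, ν = μ ∘ ⇑(α⁻¹ : Equiv.Perm I)) =
      Nat.card (MulAction.orbitRel.Quotient G ((I → β) × (I → γ))) := by
  let split : (I → δ) ≃ (I → β) × (I → γ) :=
    ((Equiv.refl I).arrowCongr e.symm).trans (Equiv.arrowProdEquivProdArrow I _ _)
  refine Nat.card_congr (Quot.congr split fun μ ν => ?_)
  have split_smul (g : G) : split (μ ∘ ⇑(g⁻¹ : Equiv.Perm I)) = g • split μ := rfl
  rw [MulAction.orbitRel_apply, MulAction.mem_orbit_symm, MulAction.mem_orbit_iff, Subtype.exists]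
  simp only [← split_smul, split.injective.eq_iff, exists_prop, eq_comm]

theorem finrank_Gsu_eq_orbits_general [DecidableEq I] [Fintype I]
    (G : Subgroup (Equiv.Perm I)) (V : Submodule ℝ (Matrix (I → Fin 2) (I → Fin 2) ℂ))
    (hV : ∀ a, a ∈ V ↔ aᴴ = -a ∧ a.trace = 0 ∧
      ∀ α ∈ G, qubitPermMatrix α * a * (qubitPermMatrix α)⁻¹ = a) :
    Module.finrank ℝ V =
      Nat.card (Quot fun μ ν : I → Fin 4 =>
        ∃ α ∈ G, ν = μ ∘ ⇑(α⁻¹ : Equiv.Perm I)) - 1 := by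
  have V_eq : V = skewAdjoint.submodule ℝ (Matrix (I → Fin 2) (I → Fin 2) ℂ) ⊓
      (tracelessInvariant ℂ G (I → Fin 2)).restrictScalars ℝ := by
    ext a
    rw [hV, forall_mem_qubitPermMatrix_conj_eq_iff]
    rfl
  rw [V_eq, finrank_skewAdjoint_inf_tracelessInvariant,
    card_orbits_strings_eq_card_orbits_pairs (finProdFinEquiv : Fin 2 × Fin 2 ≃ Fin (2 * 2))]

end Strings

/-- For `N ≥ 1` and a subgroup `G` of the permutation group of `Fin N`, the
real dimension of `Gsu(2^N)` (skew-Hermitian, traceless matrices invariant under conjugation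
by all `U_α`, `α ∈ G`) equals the number of orbits of the action `α • μ = μ ∘ α⁻¹` of `G` on
`Fin N → Fin 4`, minus one. -/
theorem finrank_Gsu_eq_orbits (N : ℕ) (hN : 1 ≤ N) (G : Subgroup (Equiv.Perm (Fin N)))
    (V : Submodule ℝ (Matrix (Fin N → Fin 2) (Fin N → Fin 2) ℂ))
    (hV : ∀ a, a ∈ V ↔ aᴴ = -a ∧ a.trace = 0 ∧
      ∀ α ∈ G, qubitPermMatrix α * a * (qubitPermMatrix α)⁻¹ = a) :
    Module.finrank ℝ V =
      Nat.card (Quot fun μ ν : Fin N → Fin 4 =>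
        ∃ α ∈ G, ν = μ ∘ ⇑(α⁻¹ : Equiv.Perm (Fin N))) - 1 :=
  finrank_Gsu_eq_orbits_general G V hV
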